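/- arXiv:math/0311510 — 2 statements merged into one kernel-verified Lean document; each statement's English description precedes it below -/
import Mathlib

section
/- Let n ≥ 2 and N ≥ 1 be natural numbers, and let R(n-1,N) denote the number of orbits of the simultaneous cyclic rotation action ((x,y,z),(a,b,c)) ↦ ((z,x,y),(c,a,b)) on pairs of ordered triples of positive integers with x + y + z = n - 1 and a + b + c = N. Then, as an identity of rational numbers, (n-1)·(N-1)(N-2)/2 + R(n-1,N) = n(n+1)(N-1)(N-2)/12 + (2/3)·ε(n,N), where ε(n,N) = 1 if 3 divides N and n ≡ 1 (mod 3), and ε(n,N) = 0 otherwise. -/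
/-!
This is Burnside's lemma for the cyclic group of order `3`. Weight a pair of triples by `3` if it
is fixed by the rotation and by `1` otherwise; then every orbit has total weight `3`
(`sum_orbitWeight_class`), so `3 * R m N` is the number of pairs plus twice the number of fixed
pairs (`three_mul_R`). There are `(m - 1)(m - 2) / 2` triples with sum `m ≥ 1`
(`card_triples_mul_two`), and a fixed pair has the form `((x,x,x),(a,a,a))`, so exactly one exists
if `3` divides both sums and none otherwise (`card_fixed`). With `m = n - 1` the claim follows from
`6 (n - 1) + (n - 2)(n - 3) = n (n + 1)`.
-/

/-- `IsTriple N t` says that `t = (a,b,c)` is an ordered triple of positive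
integers with `a + b + c = N`. -/
def IsTriple (N : ℕ) (t : ℕ × ℕ × ℕ) : Prop :=
  0 < t.1 ∧ 0 < t.2.1 ∧ 0 < t.2.2 ∧ t.1 + t.2.1 + t.2.2 = N

/-- Cyclic rotation on ordered triples: `(a,b,c) ↦ (c,a,b)`. -/
def rot (t : ℕ × ℕ × ℕ) : ℕ × ℕ × ℕ := (t.2.2, t.1, t.2.1)

/-- Simultaneous cyclic rotation on a pair of triples:
`((x,y,z),(a,b,c)) ↦ ((z,x,y),(c,a,b))`. -/
def rot2 (p : (ℕ × ℕ × ℕ) × (ℕ × ℕ × ℕ)) : (ℕ × ℕ × ℕ) × (ℕ × ℕ × ℕ) :=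
  (rot p.1, rot p.2)

lemma rot2_rot2_rot2 (p : (ℕ × ℕ × ℕ) × (ℕ × ℕ × ℕ)) : rot2 (rot2 (rot2 p)) = p := rfl

/-- The setoid whose classes are the orbits of the simultaneous cyclic rotation
action of the cyclic group of order `3` on the set of pairs of triples
satisfying `P`. -/
def pairRotSetoid (P : (ℕ × ℕ × ℕ) × (ℕ × ℕ × ℕ) → Prop) :
    Setoid {p : (ℕ × ℕ × ℕ) × (ℕ × ℕ × ℕ) // P p} where
  r x y := y.1 = x.1 ∨ y.1 = rot2 x.1 ∨ y.1 = rot2 (rot2 x.1)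
  iseqv := by
    constructor
    · intro x; exact Or.inl rfl
    · rintro x y (h | h | h)
      · exact Or.inl h.symm
      · right; right; rw [h, rot2_rot2_rot2]
      · right; left; rw [h, rot2_rot2_rot2]
    · rintro x y z (h1 | h1 | h1) (h2 | h2 | h2) <;>
        rw [h2, h1] <;> simp [rot2_rot2_rot2]

/-- `R m N` is the number of orbits of the simultaneous cyclic rotation action
on pairs of ordered triples of positive integers with coordinate sums `m`
and `N`. -/
noncomputable def R (m N : ℕ) : ℕ :=
  Nat.card (Quotient (pairRotSetoid fun p => IsTriple m p.1 ∧ IsTriple N p.2))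

/-- The finite set of ordered triples of positive integers with sum `m`. A pair `i < j < m - 1`
encodes the triple `(i + 1, j - i, m - 1 - j)`, i.e. its partial sums are `i + 1` and `j + 1`. -/
def triples (m : ℕ) : Finset (ℕ × ℕ × ℕ) :=
  ((Finset.range (m - 1)).sigma fun j => Finset.range j).image
    fun s => (s.2 + 1, s.1 - s.2, m - 1 - s.1)

lemma mem_triples {m : ℕ} {t : ℕ × ℕ × ℕ} : t ∈ triples m ↔ IsTriple m t := by
  obtain ⟨a, b, c⟩ := t
  simp only [triples, IsTriple, Finset.mem_image, Finset.mem_sigma, Finset.mem_range,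
    Prod.mk.injEq, Sigma.exists]
  constructor
  · rintro ⟨j, i, h⟩
    omega
  · intro h
    exact ⟨a + b - 1, a - 1, by omega⟩

lemma card_triples_mul_two (k : ℕ) : (triples (k + 1)).card * 2 = k * (k - 1) := by
  rw [triples, Finset.card_image_of_injOn, Finset.card_sigma]
  · simpa using Finset.sum_range_id_mul_two k
  · rintro ⟨j, i⟩ h ⟨j', i'⟩ h' e
    simp only [Finset.coe_sigma, Set.mem_sigma_iff, Finset.coe_range, Set.mem_Iio,
      Prod.mk.injEq] at h h' e
    obtain rfl : j = j' := by omega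
    obtain rfl : i = i' := by omega
    rfl

lemma rot2_eq_self_iff (p : (ℕ × ℕ × ℕ) × (ℕ × ℕ × ℕ)) :
    rot2 p = p ↔ (p.1.1 = p.1.2.1 ∧ p.1.2.1 = p.1.2.2) ∧
      (p.2.1 = p.2.2.1 ∧ p.2.2.1 = p.2.2.2) := by
  obtain ⟨⟨x, y, z⟩, a, b, c⟩ := p
  simp only [rot2, rot, Prod.mk.injEq]
  omega

/-- The weight of a pair: `3` at fixed points of the rotation, `1` elsewhere, i.e. `3` divided by
the size of its orbit. -/
def orbitWeight (p : (ℕ × ℕ × ℕ) × (ℕ × ℕ × ℕ)) : ℕ := if rot2 p = p then 3 else 1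

lemma sum_orbitWeight_class (p : (ℕ × ℕ × ℕ) × (ℕ × ℕ × ℕ)) :
    ∑ q ∈ {p, rot2 p, rot2 (rot2 p)}, orbitWeight q = 3 := by
  by_cases h : rot2 p = p
  · simp [h, orbitWeight]
  · have h1 : p ≠ rot2 p := fun e => h e.symm
    have h2 : p ≠ rot2 (rot2 p) := fun e => h (congrArg rot2 e)
    have h3 : rot2 p ≠ rot2 (rot2 p) := fun e => h1 (congrArg (fun q => rot2 (rot2 q)) e)
    rw [Finset.sum_insert (by simp [h1, h2]), Finset.sum_insert (by simp [h3]),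
      Finset.sum_singleton]
    simp [orbitWeight, h, h3.symm, rot2_rot2_rot2, h2]

lemma mem_rot2 {m N : ℕ} {p : (ℕ × ℕ × ℕ) × (ℕ × ℕ × ℕ)}
    (h : IsTriple m p.1 ∧ IsTriple N p.2) :
    IsTriple m (rot2 p).1 ∧ IsTriple N (rot2 p).2 := by
  simp only [IsTriple, rot2, rot] at h ⊢
  omega

lemma three_mul_R_eq_sum (m N : ℕ) :
    3 * R m N = ∑ p ∈ triples m ×ˢ triples N, orbitWeight p := by
  classical
  have hmem : ∀ p, p ∈ triples m ×ˢ triples N ↔ IsTriple m p.1 ∧ IsTriple N p.2 := by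
    intro p
    rw [Finset.mem_product, mem_triples, mem_triples]
  let S := {p : (ℕ × ℕ × ℕ) × (ℕ × ℕ × ℕ) // IsTriple m p.1 ∧ IsTriple N p.2}
  let _ : Fintype S := Fintype.subtype _ hmem
  let s : Setoid S := pairRotSetoid fun p => IsTriple m p.1 ∧ IsTriple N p.2
  let _ : Fintype (Quotient s) := Fintype.ofFinite _
  have hR : R m N = Fintype.card (Quotient s) := Nat.card_eq_fintype_card
  rw [Finset.sum_subtype _ hmem orbitWeight,
    ← Finset.sum_fiberwise Finset.univ (fun x : S => (Quotient.mk s x)), hR]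
  rw [Finset.sum_congr rfl (g := fun _ => 3), Finset.sum_const, Finset.card_univ, smul_eq_mul,
    mul_comm]
  intro q _
  induction q using Quotient.inductionOn with
  | _ x =>
  rw [← sum_orbitWeight_class x.1]
  refine Finset.sum_bij (fun y _ => y.1) ?_ ?_ ?_ ?_
  · intro y hy
    have : y.1 = x.1 ∨ y.1 = rot2 x.1 ∨ y.1 = rot2 (rot2 x.1) :=
      s.symm (Quotient.exact (Finset.mem_filter.1 hy).2)
    simpa using this
  · intro y _ y' _ e
    exact Subtype.ext e
  · intro p hp
    have hp' : p = x.1 ∨ p = rot2 x.1 ∨ p = rot2 (rot2 x.1) := by simpa using hp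
    have hP : IsTriple m p.1 ∧ IsTriple N p.2 := by
      rcases hp' with rfl | rfl | rfl
      · exact x.2
      · exact mem_rot2 x.2
      · exact mem_rot2 (mem_rot2 x.2)
    refine ⟨⟨p, hP⟩, Finset.mem_filter.2 ⟨Finset.mem_univ _, ?_⟩, rfl⟩
    have : s x ⟨p, hP⟩ := hp'
    exact Quotient.sound (s.symm this)
  · intro _ _
    rfl

lemma card_fixed {m N : ℕ} (hm : 1 ≤ m) (hN : 1 ≤ N) :
    ((triples m ×ˢ triples N).filter fun p => rot2 p = p).card =
      if 3 ∣ N ∧ 3 ∣ m then 1 else 0 := by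
  split_ifs with h
  · obtain ⟨⟨a, rfl⟩, x, rfl⟩ := h
    rw [Finset.card_eq_one]
    refine ⟨((x, x, x), (a, a, a)), ?_⟩
    ext ⟨⟨x', y, z⟩, a', b, c⟩
    simp only [Finset.mem_filter, Finset.mem_product, mem_triples, IsTriple, rot2_eq_self_iff,
      Finset.mem_singleton, Prod.mk.injEq]
    omega
  · rw [Finset.card_eq_zero, Finset.filter_eq_empty_iff]
    rintro ⟨⟨x, y, z⟩, a, b, c⟩ hp
    simp only [Finset.mem_product, mem_triples, IsTriple] at hp
    simp only [rot2_eq_self_iff]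
    omega

/-- Burnside's lemma for the rotation action. -/
lemma three_mul_R {m N : ℕ} (hm : 1 ≤ m) (hN : 1 ≤ N) :
    3 * R m N = (triples m).card * (triples N).card + 2 * if 3 ∣ N ∧ 3 ∣ m then 1 else 0 := by
  have hw : ∀ p, orbitWeight p = 1 + 2 * if rot2 p = p then 1 else 0 := by
    intro p
    unfold orbitWeight
    split_ifs <;> rfl
  rw [three_mul_R_eq_sum, Finset.sum_congr rfl fun p _ => hw p, Finset.sum_add_distrib,
    ← Finset.mul_sum, ← Finset.card_filter, card_fixed hm hN, ← Finset.card_eq_sum_ones,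
    Finset.card_product]

lemma cast_card_triples (k : ℕ) : ((triples (k + 1)).card : ℚ) = k * ((k : ℚ) - 1) / 2 := by
  have h : ((triples (k + 1)).card : ℚ) * 2 = ((k * (k - 1) : ℕ) : ℚ) := by
    exact_mod_cast card_triples_mul_two k
  rw [eq_div_iff two_ne_zero, h]
  cases k <;> simp

/-- For `n ≥ 2` and `N ≥ 1`, as an identity of rational numbers,
`(n-1)(N-1)(N-2)/2 + R(n-1,N) = n(n+1)(N-1)(N-2)/12 + (2/3)·ε(n,N)`,
where `ε(n,N) = 1` if `3 ∣ N` and `n ≡ 1 (mod 3)`, and `0` otherwise. -/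
theorem typeA_add_typeB (n N : ℕ) (hn : 2 ≤ n) (hN : 1 ≤ N) :
    ((n : ℚ) - 1) * (((N : ℚ) - 1) * ((N : ℚ) - 2)) / 2 + (R (n - 1) N : ℚ) =
      (n : ℚ) * ((n : ℚ) + 1) * (((N : ℚ) - 1) * ((N : ℚ) - 2)) / 12 +
        2 / 3 * (if 3 ∣ N ∧ n % 3 = 1 then 1 else 0) := by
  obtain ⟨k, rfl⟩ : ∃ k, n = k + 2 := ⟨n - 2, by omega⟩
  obtain ⟨l, rfl⟩ : ∃ l, N = l + 1 := ⟨N - 1, by omega⟩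
  have h := three_mul_R (m := k + 1) (N := l + 1) (by omega) (by omega)
  have hiff : (3 ∣ l + 1 ∧ 3 ∣ k + 1) ↔ (3 ∣ l + 1 ∧ (k + 2) % 3 = 1) := by omega
  simp only [hiff] at h
  have h' := congrArg (Nat.cast : ℕ → ℚ) h
  push_cast [cast_card_triples] at h'
  rw [show k + 2 - 1 = k + 1 from rfl]
  push_cast
  linear_combination h' / 3
end

section
/- For every natural number N ≥ 2, 3φ(N) ≤ Ψ(N), where φ is Euler's totient function and Ψ(N) = #{(k₁,k₂) ∈ ℤ² : 0 ≤ k₁,k₂ < N, gcd(k₁,k₂,N) = 1}. Moreover Ψ(N) - 3φ(N) is even. -/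
/-!
The admissible pairs `(a, b)` are split into those with `a = 0`, those with `b = 0`, those with
`a + b = N`, and the pairs of positive integers with `a + b < N` or `a + b > N`. As `N ≥ 2`, these
five classes are disjoint. Each of the first three is parametrised by the residues coprime to `N`
(`x ↦ (0, x)`, `(x, 0)`, `(x, N - x)`), so has `φ(N)` elements, and the reflection
`(a, b) ↦ (N - a, N - b)` exchanges the last two. Hence `Ψ(N) = 3 φ(N) + 2 m`, where `m` counts
the primitive triples of positive integers `(a, b, N - a - b)`.
-/

/-- `Psi d` is the two-dimensional analogue of Euler's totient function:
the number of pairs `(k₁,k₂)` with `0 ≤ k₁,k₂ < d` and `gcd(k₁,k₂,d) = 1`. -/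
noncomputable def Psi (d : ℕ) : ℕ :=
  Nat.card {p : ℕ × ℕ // p.1 < d ∧ p.2 < d ∧ Nat.gcd (Nat.gcd p.1 p.2) d = 1}

/-- The pairs counted by `Psi N`, as a finset. -/
def primPairs (N : ℕ) : Finset (ℕ × ℕ) :=
  (Finset.range N ×ˢ Finset.range N).filter fun p => Nat.gcd (Nat.gcd p.1 p.2) N = 1

lemma mem_primPairs {N : ℕ} {p : ℕ × ℕ} :
    p ∈ primPairs N ↔ p.1 < N ∧ p.2 < N ∧ Nat.gcd (Nat.gcd p.1 p.2) N = 1 := by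
  simp [primPairs, and_assoc]

lemma Psi_eq_card (N : ℕ) : Psi N = (primPairs N).card := by
  unfold Psi
  exact Nat.subtype_card _ fun _ => mem_primPairs

lemma gcd_sub_eq {a N : ℕ} (h : a ≤ N) : Nat.gcd (Nat.gcd a (N - a)) N = Nat.gcd N a := by
  rw [Nat.gcd_sub_self_right h, Nat.gcd_comm a N, Nat.gcd_assoc, Nat.gcd_comm a N,
    ← Nat.gcd_assoc, Nat.gcd_self]

/-- Reflection preserves primitivity relative to `N`, since a common divisor of `N - a`, `N - b`
and `N` divides `a` and `b`. -/
lemma gcd_reflect {a b N : ℕ} (ha : a ≤ N) (hb : b ≤ N)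
    (h : Nat.gcd (Nat.gcd a b) N = 1) : Nat.gcd (Nat.gcd (N - a) (N - b)) N = 1 := by
  apply Nat.dvd_one.mp
  rw [← h]
  have hN := Nat.gcd_dvd_right (Nat.gcd (N - a) (N - b)) N
  have hg := Nat.gcd_dvd_left (Nat.gcd (N - a) (N - b)) N
  exact Nat.dvd_gcd (Nat.dvd_gcd
    ((Nat.dvd_sub_iff_right ha hN).mp (hg.trans (Nat.gcd_dvd_left _ _)))
    ((Nat.dvd_sub_iff_right hb hN).mp (hg.trans (Nat.gcd_dvd_right _ _)))) hN

lemma card_fst_eq_zero {N : ℕ} (hN : 2 ≤ N) :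
    ((primPairs N).filter fun p => p.1 = 0).card = N.totient := by
  rw [Nat.totient_eq_card_coprime]
  symm
  refine Finset.card_bij (fun x _ => (0, x)) ?_ ?_ ?_
  · intro x hx
    simp only [Finset.mem_filter, Finset.mem_range] at hx
    simp only [Finset.mem_filter, mem_primPairs, Nat.gcd_zero_left, and_true]
    exact ⟨by omega, hx.1, hx.2.symm⟩
  · intro x _ y _ h
    exact (Prod.mk.inj h).2
  · rintro ⟨a, b⟩ h
    simp only [Finset.mem_filter, mem_primPairs] at h
    obtain ⟨⟨-, hb, hg⟩, rfl⟩ := h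
    rw [Nat.gcd_zero_left] at hg
    exact ⟨b, by simpa using ⟨hb, Nat.Coprime.symm hg⟩, rfl⟩

/-- The condition `p.1 ≠ 0` only removes `(0, 0)`, which is not primitive as `N ≥ 2`. -/
lemma card_snd_eq_zero {N : ℕ} (hN : 2 ≤ N) :
    ((primPairs N).filter fun p => p.1 ≠ 0 ∧ p.2 = 0).card = N.totient := by
  rw [Nat.totient_eq_card_coprime]
  symm
  refine Finset.card_bij (fun x _ => (x, 0)) ?_ ?_ ?_
  · intro x hx
    simp only [Finset.mem_filter, Finset.mem_range] at hx
    simp only [Finset.mem_filter, mem_primPairs, Nat.gcd_zero_right, and_true]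
    refine ⟨⟨hx.1, by omega, hx.2.symm⟩, ?_⟩
    rintro rfl
    have := hx.2
    simp at this
    omega
  · intro x _ y _ h
    exact (Prod.mk.inj h).1
  · rintro ⟨a, b⟩ h
    simp only [Finset.mem_filter, mem_primPairs] at h
    obtain ⟨⟨ha, -, hg⟩, -, rfl⟩ := h
    rw [Nat.gcd_zero_right] at hg
    exact ⟨a, by simpa using ⟨ha, Nat.Coprime.symm hg⟩, rfl⟩

lemma card_add_eq {N : ℕ} (hN : 2 ≤ N) :
    ((primPairs N).filter fun p => p.1 ≠ 0 ∧ p.2 ≠ 0 ∧ p.1 + p.2 = N).card = N.totient := by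
  rw [Nat.totient_eq_card_coprime]
  symm
  refine Finset.card_bij (fun x _ => (x, N - x)) ?_ ?_ ?_
  · intro x hx
    simp only [Finset.mem_filter, Finset.mem_range] at hx
    have hx0 : x ≠ 0 := by
      rintro rfl
      have := hx.2
      simp at this
      omega
    simp only [Finset.mem_filter, mem_primPairs]
    exact ⟨⟨hx.1, by omega, (gcd_sub_eq hx.1.le).trans hx.2⟩, hx0, by omega, by omega⟩
  · intro x _ y _ h
    exact (Prod.mk.inj h).1
  · rintro ⟨a, b⟩ h
    simp only [Finset.mem_filter, mem_primPairs] at h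
    obtain ⟨⟨ha, -, hg⟩, -, -, hs⟩ := h
    obtain rfl : b = N - a := by omega
    rw [gcd_sub_eq ha.le] at hg
    exact ⟨a, by simpa using ⟨ha, hg⟩, rfl⟩

lemma card_lt_eq_card_gt (N : ℕ) :
    ((primPairs N).filter fun p => p.1 ≠ 0 ∧ p.2 ≠ 0 ∧ p.1 + p.2 < N).card =
      ((primPairs N).filter fun p => p.1 ≠ 0 ∧ p.2 ≠ 0 ∧ N < p.1 + p.2).card := by
  refine Finset.card_nbij' (fun p => (N - p.1, N - p.2)) (fun p => (N - p.1, N - p.2)) ?_ ?_ ?_ ?_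
  all_goals
    rintro ⟨a, b⟩ h
    simp only [Finset.coe_filter, Set.mem_ofPred_eq, mem_primPairs] at h
    obtain ⟨⟨ha, hb, hg⟩, ha0, hb0, hs⟩ := h
  · simp only [Finset.coe_filter, Set.mem_ofPred_eq, mem_primPairs]
    exact ⟨⟨by omega, by omega, gcd_reflect ha.le hb.le hg⟩, by omega, by omega, by omega⟩
  · simp only [Finset.coe_filter, Set.mem_ofPred_eq, mem_primPairs]
    exact ⟨⟨by omega, by omega, gcd_reflect ha.le hb.le hg⟩, by omega, by omega, by omega⟩
  · simp only [Prod.mk.injEq]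
    omega
  · simp only [Prod.mk.injEq]
    omega

lemma card_primPairs_split (N : ℕ) :
    (primPairs N).card =
      ((primPairs N).filter fun p => p.1 = 0).card +
      ((primPairs N).filter fun p => p.1 ≠ 0 ∧ p.2 = 0).card +
      ((primPairs N).filter fun p => p.1 ≠ 0 ∧ p.2 ≠ 0 ∧ p.1 + p.2 = N).card +
      ((primPairs N).filter fun p => p.1 ≠ 0 ∧ p.2 ≠ 0 ∧ p.1 + p.2 < N).card +
      ((primPairs N).filter fun p => p.1 ≠ 0 ∧ p.2 ≠ 0 ∧ N < p.1 + p.2).card := by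
  simp only [Finset.card_filter, ← Finset.sum_add_distrib]
  rw [Finset.card_eq_sum_ones]
  refine Finset.sum_congr rfl fun p _ => ?_
  split_ifs <;> omega

/-- For every `N ≥ 2`, `3φ(N) ≤ Ψ(N)`, and `Ψ(N) - 3φ(N)` is even. -/
theorem three_totient_le_Psi (N : ℕ) (hN : 2 ≤ N) :
    3 * Nat.totient N ≤ Psi N ∧ Even (Psi N - 3 * Nat.totient N) := by
  have h := card_primPairs_split N
  rw [card_fst_eq_zero hN, card_snd_eq_zero hN, card_add_eq hN, ← card_lt_eq_card_gt,
    ← Psi_eq_card] at h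
  exact ⟨by omega,
    ((primPairs N).filter fun p => p.1 ≠ 0 ∧ p.2 ≠ 0 ∧ p.1 + p.2 < N).card, by omega⟩
end
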